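/- Let n ≥ 2, let π/2 < D < π, and let C ⊆ S^n be a solid D-maximal set. Then there exists a strongly regular boundary point x₀ ∈ ∂C such that for every 2-dimensional linear subspace L of ℝ^{n+1} with x₀ ∈ L and every ε ∈ (0, π/2), there exists a strongly regular boundary point y ∈ ∂C with d(y, x₀) < ε and y ∉ L. -/

import Mathlib

/-!
Suppose that every strongly regular point `x₀` has a `2`-dimensional `L ∋ x₀` containing all nearby
strongly regular points. Since `dim L = 2 < n + 1`, `L` lies in a hyperplane, and since strongly
regular points are dense in `∂C` (`exists_stronglyRegular`), `∂C` lies in that hyperplane near `x₀`.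
So near every strongly regular point `C` is a half-cap, bounded by a hyperplane `ν^⊥` all of whose
points near `x₀` lie in `∂C` (`exists_halfCap`).

Maximality of the volume enters only through `exists_inner_eq`: each boundary point is at distance
`D` from some point of `C`, because otherwise a small ball could be added to `C`. Conversely a point
of `C` at distance `D` from another one is a boundary point. With `c = -cos D > 0` and `s = sin D`,
a first-variation argument (`eq_of_inner_eq`) shows that, for `x ∈ ν^⊥` near `x₀` the only point of
`C` at distance `D` from `x` is `A x = -c x + s ν`. These points fill a piece of a small sphere in
`∂C`. The same kind of argument (`eq_or_eq_of_inner_eq`) shows that the points of `C` at distance `D`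
from `A x` can only be `x` and `B x = (2c² - 1) x - 2cs ν`.

If `B x ∈ C` for all such `x`, then the constraints imposed by the points `x` and `B x` squeeze `C`
into a hypersurface near `A x₀`, against `C = closure (interior C)` (`false_of_second_points`).
Otherwise `B x₁ ∉ C` for some `x₁`; by compactness every point of `C` at distance `D` from a boundary
point near `A x₁` is near `x₁`, so it is in `ν^⊥`, and `∂C` near `A x₁` consists of points `A x`. At a
strongly regular point there, `∂C` contains a piece of a small sphere and is contained in a
hyperplane, which is impossible for `n ≥ 2` (`eq_zero_of_small_sphere`).
-/

open MeasureTheory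

noncomputable section

/-- Euclidean space `ℝ^{n+1}`. -/
abbrev Esp (n : ℕ) : Type := EuclideanSpace ℝ (Fin (n + 1))

/-- The unit sphere `S^n ⊆ ℝ^{n+1}`, as a subtype. -/
abbrev Sph (n : ℕ) : Type := Metric.sphere (0 : Esp n) 1

/-- Geodesic distance `d(x,y) = arccos ⟨x,y⟩` on the sphere. -/
def gd {n : ℕ} (x y : Sph n) : ℝ :=
  Real.arccos (inner (𝕜 := ℝ) (x : Esp n) (y : Esp n))

/-- Closed geodesic ball `B(z,r) = {x ∈ Sⁿ : d(x,z) ≤ r}`. -/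
def sphBall {n : ℕ} (z : Sph n) (r : ℝ) : Set (Sph n) := {x | gd x z ≤ r}

/-- Geodesic diameter `diam X = sup {d(x,y) : x, y ∈ X}`. -/
def sphDiam {n : ℕ} (X : Set (Sph n)) : ℝ :=
  sSup {r | ∃ x ∈ X, ∃ y ∈ X, r = gd x y}

/-- Spherical volume: the `n`-dimensional (Hausdorff) surface measure on `S^n`. -/
def sphVol (n : ℕ) : Measure (Sph n) := μH[(n : ℝ)]

/-- A set `C ⊆ S^n` is `D`-maximal: compact, of geodesic diameter at most `D`, and of
maximal spherical volume among compact sets of diameter at most `D`. -/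
def DMaximal (n : ℕ) (D : ℝ) (C : Set (Sph n)) : Prop :=
  IsCompact C ∧ sphDiam C ≤ D ∧
    sphVol n C =
      sSup {v | ∃ X : Set (Sph n), IsCompact X ∧ sphDiam X ≤ D ∧ v = sphVol n X}

/-- A nonempty compact set `C ⊆ S^n`, `C ≠ S^n`, is solid if it equals the closure
of its interior (in the topology of `S^n`). -/
def Solid {n : ℕ} (C : Set (Sph n)) : Prop :=
  C.Nonempty ∧ IsCompact C ∧ C ≠ Set.univ ∧ C = closure (interior C)

/-- `x` is a strongly regular boundary point of `C`: `x ∈ ∂C` and there are `r > 0`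
and `z ∈ C` with `B(z,r) ⊆ C` and `d(x,z) = r`. -/
def StronglyRegular {n : ℕ} (C : Set (Sph n)) (x : Sph n) : Prop :=
  x ∈ frontier C ∧ ∃ r > 0, ∃ z ∈ C, sphBall z r ⊆ C ∧ gd x z = r

open Filter Topology
open scoped RealInnerProductSpace

/-! ### Local finiteness and positivity of the spherical volume -/

lemma norm_sph {n : ℕ} (x : Sph n) : ‖(x : Esp n)‖ = 1 := by
  simp

lemma inner_self_sph {n : ℕ} (x : Sph n) : ⟪(x : Esp n), (x : Esp n)⟫ = 1 := by
  rw [real_inner_self_eq_norm_sq, norm_sph, one_pow]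

lemma normalize_lipschitz {n : ℕ} (a b : Esp n) (ha : 1 ≤ ‖a‖) (hb : 1 ≤ ‖b‖) :
    ‖‖a‖⁻¹ • a - ‖b‖⁻¹ • b‖ ≤ 2 * ‖a - b‖ := by
  have ha0 : 0 < ‖a‖ := by linarith
  have hb0 : 0 < ‖b‖ := by linarith
  have e : ‖a‖⁻¹ • a - ‖b‖⁻¹ • b = ‖a‖⁻¹ • (a - b) + (‖a‖⁻¹ - ‖b‖⁻¹) • b := by module
  rw [e]
  have hinv : ‖a‖⁻¹ ≤ 1 := inv_le_one_of_one_le₀ ha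
  have h1 : ‖‖a‖⁻¹ • (a - b)‖ ≤ ‖a - b‖ := by
    rw [norm_smul, norm_inv, norm_norm]
    exact mul_le_of_le_one_left (norm_nonneg _) hinv
  have h2 : ‖(‖a‖⁻¹ - ‖b‖⁻¹) • b‖ ≤ ‖a - b‖ := by
    rw [norm_smul, Real.norm_eq_abs]
    have : (‖a‖⁻¹ - ‖b‖⁻¹) = ‖a‖⁻¹ * ‖b‖⁻¹ * (‖b‖ - ‖a‖) := by field_simp
    rw [this, abs_mul, abs_of_pos (by positivity)]
    have h3 : |‖b‖ - ‖a‖| ≤ ‖a - b‖ := by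
      rw [abs_sub_comm]; exact abs_norm_sub_norm_le a b
    calc ‖a‖⁻¹ * ‖b‖⁻¹ * |‖b‖ - ‖a‖| * ‖b‖ = ‖a‖⁻¹ * |‖b‖ - ‖a‖| := by field_simp
      _ ≤ |‖b‖ - ‖a‖| := mul_le_of_le_one_left (abs_nonneg _) hinv
      _ ≤ _ := h3
  linarith [norm_add_le (‖a‖⁻¹ • (a - b)) ((‖a‖⁻¹ - ‖b‖⁻¹) • b)]

lemma finrank_perp {n : ℕ} (x : Sph n) :
    Module.finrank ℝ (Submodule.span ℝ {(x : Esp n)})ᗮ = n := by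
  have : Fact (Module.finrank ℝ (Esp n) = n + 1) := ⟨by simp⟩
  exact Submodule.finrank_orthogonal_span_singleton (by
    intro h; have := norm_sph x; rw [h] at this; simp at this)

lemma inner_perp {n : ℕ} (x : Sph n) (u : (Submodule.span ℝ {(x : Esp n)})ᗮ) :
    ⟪(x : Esp n), (u : Esp n)⟫ = 0 :=
  Submodule.mem_orthogonal_singleton_iff_inner_right.1 u.2

lemma norm_perp {n : ℕ} (x : Sph n) (u : (Submodule.span ℝ {(x : Esp n)})ᗮ) (a : ℝ) :
    ‖a • (x : Esp n) + u‖ ^ 2 = a ^ 2 + ‖u‖ ^ 2 := by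
  rw [norm_add_sq_real, norm_smul, norm_sph, real_inner_smul_left, inner_perp]
  simp

/-- The spherical volume is locally finite: a neighbourhood of `x` is the Lipschitz image, under
central projection, of a ball in the `n`-dimensional tangent space at `x`. -/
lemma sphVol_locallyFinite (n : ℕ) : IsLocallyFiniteMeasure (sphVol n) := by
  refine ⟨fun x => ?_⟩
  let F := (Submodule.span ℝ {(x : Esp n)})ᗮ
  have hn1 : ∀ u : F, 1 ≤ ‖(x : Esp n) + u‖ := by
    intro u
    have := norm_perp x u 1
    rw [one_smul] at this
    nlinarith [norm_nonneg ((x : Esp n) + u), sq_nonneg ‖u‖]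
  let h : F → Sph n := fun u => ⟨‖(x : Esp n) + u‖⁻¹ • ((x : Esp n) + u), by
    have := hn1 u
    rw [mem_sphere_zero_iff_norm, norm_smul, norm_inv, norm_norm, inv_mul_cancel₀ (by linarith)]⟩
  have hl : LipschitzWith 2 h := by
    refine LipschitzWith.of_dist_le_mul fun u v => ?_
    rw [Subtype.dist_eq, dist_eq_norm, dist_eq_norm]
    have := normalize_lipschitz ((x : Esp n) + (u : Esp n)) ((x : Esp n) + (v : Esp n)) (hn1 u) (hn1 v)
    rw [add_sub_add_left_eq_sub] at this
    simpa [h] using this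
  refine ⟨h '' Metric.closedBall 0 2, ?_, ?_⟩
  · have hO : {z : Sph n | 1 / 2 < ⟪(x : Esp n), (z : Esp n)⟫} ∈ 𝓝 x := by
      refine IsOpen.mem_nhds (isOpen_lt continuous_const (by fun_prop)) ?_
      simp only [Set.mem_ofPred_eq, inner_self_sph]; norm_num
    refine mem_of_superset hO fun z hz => ?_
    set a := ⟪(x : Esp n), (z : Esp n)⟫ with ha
    have hz : 1 / 2 < a := hz
    have hap : 0 < a := by linarith
    have hmem : a⁻¹ • (z : Esp n) - x ∈ F := by
      refine Submodule.mem_orthogonal_singleton_iff_inner_right.2 ?_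
      rw [inner_sub_right, inner_smul_right, inner_self_sph, ← ha, inv_mul_cancel₀ hap.ne', sub_self]
    have e : (x : Esp n) + (a⁻¹ • (z : Esp n) - x) = a⁻¹ • (z : Esp n) := by abel
    have hnz : ‖a⁻¹ • (z : Esp n)‖ = a⁻¹ := by
      rw [norm_smul, norm_sph, mul_one, Real.norm_of_nonneg (by positivity)]
    refine ⟨⟨_, hmem⟩, ?_, ?_⟩
    · have h1 := norm_perp x ⟨_, hmem⟩ 1
      rw [one_smul] at h1
      simp only [e, hnz] at h1
      have h2 : a⁻¹ ≤ 2 := by rw [inv_le_comm₀ hap (by norm_num)]; linarith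
      have h3 : 0 < a⁻¹ := by positivity
      rw [mem_closedBall_zero_iff]
      nlinarith [norm_nonneg (⟨_, hmem⟩ : F)]
    · apply Subtype.ext
      simp only [h, e, hnz, inv_inv, smul_smul, mul_inv_cancel₀ hap.ne', one_smul]
  · have h1 := hl.hausdorffMeasure_image_le (d := n) (by positivity) (Metric.closedBall 0 2)
    have hfin : (μH[(n : ℝ)] : Measure F) (Metric.closedBall 0 2) < ⊤ := by
      have : Measure.IsAddHaarMeasure (μH[(n : ℝ)] : Measure F) := by
        have := isAddHaarMeasure_hausdorffMeasure (E := F)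
        rwa [finrank_perp] at this
      exact (isCompact_closedBall _ _).measure_lt_top
    refine lt_of_le_of_lt h1 (ENNReal.mul_lt_top ?_ hfin)
    exact ENNReal.rpow_lt_top_of_nonneg (by positivity) (by simp)

/-- Nonempty open sets have positive spherical volume: the orthogonal projection to the tangent
space at one of their points is `1`-Lipschitz and its image contains a neighbourhood of `0`. -/
lemma sphVol_pos_of_isOpen {n : ℕ} {V : Set (Sph n)} (hV : IsOpen V) (hne : V.Nonempty) :
    0 < sphVol n V := by
  obtain ⟨x, hx⟩ := hne
  obtain ⟨O, hO, rfl⟩ := isOpen_induced_iff.1 hV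
  let F := (Submodule.span ℝ {(x : Esp n)})ᗮ
  let p : Sph n → F := fun z => F.orthogonalProjectionOnto (z : Esp n)
  have hp : LipschitzWith 1 p := by
    refine LipschitzWith.of_dist_le_mul fun u v => ?_
    rw [Subtype.dist_eq u v, dist_eq_norm, dist_eq_norm, ← map_sub, NNReal.coe_one, one_mul]
    exact Submodule.norm_orthogonalProjectionOnto_apply_le _ _
  let g : F → Esp n := fun u => √(1 - ‖u‖ ^ 2) • (x : Esp n) + u
  have hg : Continuous g := by fun_prop
  have hW : IsOpen (Metric.ball (0 : F) 1 ∩ g ⁻¹' O) := Metric.isOpen_ball.inter (hO.preimage hg)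
  have hsub : Metric.ball (0 : F) 1 ∩ g ⁻¹' O ⊆ p '' (Subtype.val ⁻¹' O) := by
    rintro u ⟨hu1, hu2⟩
    rw [mem_ball_zero_iff] at hu1
    have h1 : 0 ≤ 1 - ‖u‖ ^ 2 := by nlinarith [norm_nonneg u]
    have hgn : ‖g u‖ = 1 := by
      have := norm_perp x u √(1 - ‖u‖ ^ 2)
      rw [Real.sq_sqrt h1] at this
      have h2 : ‖g u‖ ^ 2 = 1 := by simpa [g] using this
      nlinarith [norm_nonneg (g u)]
    refine ⟨⟨g u, by simpa using hgn⟩, hu2, ?_⟩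
    have h3 : F.orthogonalProjectionOnto (x : Esp n) = 0 :=
      Submodule.orthogonalProjectionOnto_eq_zero_iff.2
        (Submodule.le_orthogonal_orthogonal _ (Submodule.mem_span_singleton_self _))
    simp [p, g, h3]
  have hHaar : Measure.IsAddHaarMeasure (μH[(n : ℝ)] : Measure F) := by
    have := isAddHaarMeasure_hausdorffMeasure (E := F)
    rwa [finrank_perp] at this
  have hpos : 0 < (μH[(n : ℝ)] : Measure F) (Metric.ball (0 : F) 1 ∩ g ⁻¹' O) :=
    hW.measure_pos _ ⟨0, by simp, by simpa [g] using hx⟩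
  have h1 := hp.hausdorffMeasure_image_le (d := n) (by positivity) (Subtype.val ⁻¹' O)
  simp only [ENNReal.coe_one, ENNReal.one_rpow, one_mul] at h1
  exact lt_of_lt_of_le hpos ((measure_mono hsub).trans h1)

/-! ### Caps, half-caps and density of strongly regular points -/

lemma inner_neg_one_le {n : ℕ} (x y : Sph n) : -1 ≤ ⟪(x : Esp n), (y : Esp n)⟫ := by
  have := abs_real_inner_le_norm (x : Esp n) (y : Esp n)
  rw [norm_sph, norm_sph, mul_one] at this
  exact (abs_le.1 this).1

lemma inner_le_one {n : ℕ} (x y : Sph n) : ⟪(x : Esp n), (y : Esp n)⟫ ≤ 1 := by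
  have := abs_real_inner_le_norm (x : Esp n) (y : Esp n)
  rw [norm_sph, norm_sph, mul_one] at this
  exact (abs_le.1 this).2

lemma inner_eq_dist {n : ℕ} (x y : Sph n) :
    ⟪(x : Esp n), (y : Esp n)⟫ = 1 - dist x y ^ 2 / 2 := by
  rw [Subtype.dist_eq, dist_eq_norm, norm_sub_sq_real, norm_sph, norm_sph]
  ring

lemma inner_lt_one {n : ℕ} {x y : Sph n} (h : x ≠ y) : ⟪(x : Esp n), (y : Esp n)⟫ < 1 := by
  rw [inner_eq_dist]
  have := dist_pos.2 h
  nlinarith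

/-- Moving `x` slightly in the direction `u` and renormalizing stays in a neighbourhood of `x`. -/
lemma eventually_path {n : ℕ} {x : Sph n} (u : Esp n) {V : Set (Sph n)} (hV : V ∈ 𝓝 x) :
    ∀ᶠ t in 𝓝 (0 : ℝ), ∃ z ∈ V, ∃ N : ℝ, 0 < N ∧ N • (z : Esp n) = x + t • u ∧
      N ^ 2 = 1 + 2 * t * ⟪(x : Esp n), u⟫ + t ^ 2 * ‖u‖ ^ 2 := by
  obtain ⟨O, hO, hOV⟩ := mem_nhds_induced _ _ _ |>.1 hV
  have hc0 : Continuous fun t : ℝ => (x : Esp n) + t • u := by fun_prop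
  have h0 : ∀ᶠ t in 𝓝 (0 : ℝ), (x : Esp n) + t • u ≠ 0 := by
    refine hc0.continuousAt.eventually_ne ?_
    intro h
    have := norm_sph x
    simp at h
    rw [h] at this; simp at this
  have hc : ContinuousAt (fun t : ℝ => ‖(x : Esp n) + t • u‖⁻¹ • ((x : Esp n) + t • u)) 0 := by
    refine ContinuousAt.smul (ContinuousAt.inv₀ hc0.norm.continuousAt ?_) hc0.continuousAt
    simp
  have h1 : ∀ᶠ t in 𝓝 (0 : ℝ), ‖(x : Esp n) + t • u‖⁻¹ • ((x : Esp n) + t • u) ∈ O := by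
    refine hc ?_
    simpa using hO
  filter_upwards [h0, h1] with t ht0 ht1
  have hN : 0 < ‖(x : Esp n) + t • u‖ := norm_pos_iff.2 ht0
  refine ⟨⟨‖(x : Esp n) + t • u‖⁻¹ • ((x : Esp n) + t • u), ?_⟩, hOV ht1, _, hN, ?_, ?_⟩
  · rw [mem_sphere_zero_iff_norm, norm_smul, norm_inv, norm_norm, inv_mul_cancel₀ hN.ne']
  · rw [smul_smul, mul_inv_cancel₀ hN.ne', one_smul]
  · rw [norm_add_sq_real, norm_sph, norm_smul, inner_smul_right, mul_pow, Real.norm_eq_abs, sq_abs]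
    ring

lemma exists_path_pos {n : ℕ} {x : Sph n} (u : Esp n) {V : Set (Sph n)} (hV : V ∈ 𝓝 x) :
    ∃ t : ℝ, 0 < t ∧ ∃ z ∈ V, ∃ N : ℝ, 0 < N ∧ N • (z : Esp n) = x + t • u ∧
      N ^ 2 = 1 + 2 * t * ⟪(x : Esp n), u⟫ + t ^ 2 * ‖u‖ ^ 2 := by
  have h1 : ∀ᶠ t in 𝓝[>] (0 : ℝ), 0 < t := self_mem_nhdsWithin
  exact (h1.and ((eventually_path u hV).filter_mono nhdsWithin_le_nhds)).exists

/-- A point `x ≠ w` of the closed hemisphere around `w` can be moved strictly closer to `w` by an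
arbitrarily small amount. -/
lemma exists_closer {n : ℕ} {x w : Sph n} (h0 : 0 ≤ ⟪(x : Esp n), (w : Esp n)⟫)
    (h1 : ⟪(x : Esp n), (w : Esp n)⟫ < 1) {V : Set (Sph n)} (hV : V ∈ 𝓝 x) :
    ∃ z ∈ V, ⟪(x : Esp n), (w : Esp n)⟫ < ⟪(z : Esp n), (w : Esp n)⟫ := by
  obtain ⟨t, ht, z, hz, N, hN, hNz, hN2⟩ := exists_path_pos (w : Esp n) hV
  refine ⟨z, hz, ?_⟩
  have h2 := congrArg (fun v => ⟪v, (w : Esp n)⟫) hNz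
  simp only [real_inner_smul_left, inner_add_left, inner_self_sph, mul_one] at h2
  rw [norm_sph] at hN2
  set k := ⟪(x : Esp n), (w : Esp n)⟫
  set q := ⟪(z : Esp n), (w : Esp n)⟫
  by_contra! hq
  have hq0 : 0 < q := by
    by_contra! h; nlinarith
  have h3 : q ^ 2 ≤ k ^ 2 := by nlinarith
  have h4 : N ^ 2 * q ^ 2 = (k + t) ^ 2 := by rw [← h2]; ring
  have h5 : N ^ 2 * q ^ 2 ≤ N ^ 2 * k ^ 2 := by gcongr
  have h6 : 0 < (2 * k * t + t ^ 2) * (1 - k ^ 2) := by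
    apply mul_pos <;> nlinarith [mul_nonneg h0 ht.le]
  rw [hN2] at h5 h4
  nlinarith

lemma exists_farther {n : ℕ} {x w : Sph n} {c : ℝ} (hc0 : 0 < c) (hc1 : c < 1)
    (h : ⟪(x : Esp n), (w : Esp n)⟫ = -c) {V : Set (Sph n)} (hV : V ∈ 𝓝 x) :
    ∃ z ∈ V, ⟪(z : Esp n), (w : Esp n)⟫ < -c := by
  have e : ⟪(x : Esp n), ((-w : Sph n) : Esp n)⟫ = c := by simp [h]
  obtain ⟨z, hz, hz2⟩ := exists_closer (w := -w) (by rw [e]; exact hc0.le) (by rw [e]; exact hc1) hV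
  refine ⟨z, hz, ?_⟩
  rw [e] at hz2
  simp at hz2
  linarith

lemma cap_mem_nhds {n : ℕ} (x y : Sph n) {k : ℝ} (hk : k < ⟪(y : Esp n), (x : Esp n)⟫) :
    {z : Sph n | k < ⟪(z : Esp n), (x : Esp n)⟫} ∈ 𝓝 y :=
  IsOpen.mem_nhds (isOpen_lt continuous_const (by fun_prop)) hk

lemma exists_cap_subset {n : ℕ} {x : Sph n} {V : Set (Sph n)} (hV : V ∈ 𝓝 x) :
    ∃ k : ℝ, 0 ≤ k ∧ k < 1 ∧ ∀ z : Sph n, k < ⟪(z : Esp n), (x : Esp n)⟫ → z ∈ V := by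
  obtain ⟨ε, hε, hV⟩ := Metric.mem_nhds_iff.1 hV
  refine ⟨max 0 (1 - ε ^ 2 / 2), le_max_left _ _, max_lt one_pos (by nlinarith), fun z hz => hV ?_⟩
  have := lt_of_le_of_lt (le_max_right _ _) hz
  rw [inner_eq_dist] at this
  rw [Metric.mem_ball]
  exact lt_of_pow_lt_pow_left₀ 2 hε.le (by linarith)

/-- The intersection of a cap of radius at most `π / 2` with an open hemisphere is the radial
projection of a convex cone, hence connected. -/
lemma isPreconnected_halfCap {n : ℕ} (x : Sph n) (ν : Esp n) {k : ℝ} (hk : 0 ≤ k) :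
    IsPreconnected {z : Sph n | 0 < ⟪(z : Esp n), ν⟫ ∧ k < ⟪(z : Esp n), (x : Esp n)⟫} := by
  rw [← Topology.IsInducing.subtypeVal.isPreconnected_image]
  have hK : Convex ℝ {v : Esp n | 0 < ⟪v, ν⟫ ∧ k * ‖v‖ < ⟪v, (x : Esp n)⟫} := by
    intro v hv w hw a b ha hb hab
    obtain ⟨hv1, hv2⟩ := hv
    obtain ⟨hw1, hw2⟩ := hw
    have hn : ‖a • v + b • w‖ ≤ a * ‖v‖ + b * ‖w‖ := by
      refine (norm_add_le _ _).trans ?_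
      rw [norm_smul, norm_smul, Real.norm_of_nonneg ha, Real.norm_of_nonneg hb]
    have hn2 := mul_le_mul_of_nonneg_left hn hk
    constructor
    · rw [inner_add_left, real_inner_smul_left, real_inner_smul_left]
      rcases ha.eq_or_lt with rfl | ha'
      · have : b = 1 := by linarith
        subst this; simpa using hw1
      · have := mul_pos ha' hv1
        have := mul_nonneg hb hw1.le
        linarith
    · rw [inner_add_left, real_inner_smul_left, real_inner_smul_left]
      rcases ha.eq_or_lt with rfl | ha'
      · have : b = 1 := by linarith
        subst this; simpa using hw2
      · have := mul_lt_mul_of_pos_left hv2 ha'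
        have := mul_le_mul_of_nonneg_left hw2.le hb
        linarith
  have hne : ∀ v ∈ {v : Esp n | 0 < ⟪v, ν⟫ ∧ k * ‖v‖ < ⟪v, (x : Esp n)⟫}, ‖v‖ ≠ 0 := by
    rintro v ⟨hv, -⟩ h
    rw [norm_eq_zero] at h
    simp [h] at hv
  have hcont : ContinuousOn (fun v : Esp n => ‖v‖⁻¹ • v)
      {v : Esp n | 0 < ⟪v, ν⟫ ∧ k * ‖v‖ < ⟪v, (x : Esp n)⟫} :=
    (continuousOn_id.norm.inv₀ hne).smul continuousOn_id
  convert hK.isPreconnected.image _ hcont using 1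
  ext v
  constructor
  · rintro ⟨z, ⟨h1, h2⟩, rfl⟩
    refine ⟨z, ⟨h1, ?_⟩, ?_⟩
    · rwa [norm_sph, mul_one]
    · simp only [norm_sph, inv_one, one_smul]
  · rintro ⟨v, hv, rfl⟩
    have hp : 0 < ‖v‖ := lt_of_le_of_ne (norm_nonneg v) (hne v hv).symm
    obtain ⟨h1, h2⟩ := hv
    refine ⟨⟨‖v‖⁻¹ • v, ?_⟩, ⟨?_, ?_⟩, rfl⟩
    · rw [mem_sphere_zero_iff_norm, norm_smul, norm_inv, norm_norm, inv_mul_cancel₀ hp.ne']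
    · simp only [real_inner_smul_left]; positivity
    · simp only [real_inner_smul_left]
      rw [inv_mul_eq_div, lt_div_iff₀ hp]
      exact h2

lemma subset_or_of_isPreconnected {n : ℕ} {C T : Set (Sph n)} (hC : IsClosed C)
    (hT : IsPreconnected T) (hd : ∀ z ∈ T, z ∉ frontier C) :
    T ⊆ C ∨ T ⊆ Cᶜ := by
  have := hT.subset_or_subset isOpen_interior hC.isOpen_compl
    (disjoint_compl_right.mono_left interior_subset) (by
      intro z hz
      by_cases h : z ∈ C
      · left
        by_contra h2
        exact hd z hz ⟨subset_closure h, h2⟩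
      · exact Or.inr h)
  exact this.imp_left fun h => h.trans interior_subset

/-- Strongly regular points are dense in the boundary of a set that is the closure of its
interior: grow a ball around an interior point until it touches the boundary. -/
lemma exists_stronglyRegular {n : ℕ} {C : Set (Sph n)} (hC : IsClosed C)
    (hS : C ⊆ closure (interior C)) {x : Sph n} (hx : x ∈ frontier C) {V : Set (Sph n)}
    (hV : V ∈ 𝓝 x) : ∃ y ∈ V, StronglyRegular C y := by
  obtain ⟨ε, hε, hV⟩ := Metric.mem_nhds_iff.1 hV
  have hxC : x ∈ closure (interior C) := hS (hC.frontier_subset hx)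
  obtain ⟨p, hp, hpx⟩ := Metric.mem_closure_iff.1 hxC (min (ε / 2) 1) (by positivity)
  rw [dist_comm] at hpx
  obtain ⟨y, hy, hymin⟩ := (isClosed_frontier (s := C)).isCompact.exists_isMinOn ⟨x, hx⟩
    (f := fun y => dist p y) (by fun_prop)
  have hyx : dist p y ≤ dist p x := hymin hx
  have hyp : y ≠ p := by rintro rfl; exact hy.2 hp
  set k := ⟪(y : Esp n), (p : Esp n)⟫ with hk
  have hk0 : 0 ≤ k := by
    rw [hk, inner_eq_dist, dist_comm]
    have := hpx.trans_le (min_le_right _ _)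
    nlinarith [dist_nonneg (x := p) (y := y)]
  have hk1 : k < 1 := inner_lt_one hyp
  have hcap : ∀ z : Sph n, k < ⟪(z : Esp n), (p : Esp n)⟫ → z ∈ C := by
    have hpc := isPreconnected_halfCap p (p : Esp n) hk0
    rcases subset_or_of_isPreconnected hC hpc (by
      rintro z ⟨-, hz⟩ hzf
      have h1 : dist p y ≤ dist p z := hymin hzf
      rw [hk, inner_eq_dist, inner_eq_dist, dist_comm y, dist_comm z] at hz
      nlinarith [dist_nonneg (x := p) (y := y)]) with h | h
    · exact fun z hz => h ⟨hk0.trans_lt hz, hz⟩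
    · exfalso
      refine h ⟨?_, ?_⟩ (interior_subset hp) <;> rw [inner_self_sph]
      · exact one_pos
      · exact hk1
  refine ⟨y, hV ?_, hy, gd y p, ?_, p, interior_subset hp, ?_, rfl⟩
  · rw [Metric.mem_ball]
    have := hpx.trans_le (min_le_left _ _)
    linarith [dist_triangle_left y x p]
  · exact Real.arccos_pos.2 hk1
  · intro z hz
    have hz : gd z p ≤ gd y p := hz
    have hkz : k ≤ ⟪(z : Esp n), (p : Esp n)⟫ := by
      by_contra! h
      exact absurd hz (not_le.2 (Real.strictAntiOn_arccos
        ⟨inner_neg_one_le _ _, inner_le_one _ _⟩ ⟨inner_neg_one_le _ _, inner_le_one _ _⟩ h))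
    rcases hkz.lt_or_eq with h | h
    · exact hcap z h
    · rw [← hC.closure_eq, mem_closure_iff_nhds]
      intro W hW
      obtain ⟨z', hz', h'⟩ := exists_closer (w := p) (h ▸ hk0) (h ▸ hk1) hW
      exact ⟨z', hz', hcap z' (h ▸ h')⟩

lemma exists_halfSpace_pos {n : ℕ} {x z : Sph n} {ν : Esp n} {k : ℝ} (hν : ν ≠ 0)
    (hz : k < ⟪(z : Esp n), (x : Esp n)⟫) (h0 : ⟪(z : Esp n), ν⟫ = 0) {V : Set (Sph n)}
    (hV : V ∈ 𝓝 z) :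
    ∃ y ∈ V, 0 < ⟪(y : Esp n), ν⟫ ∧ k < ⟪(y : Esp n), (x : Esp n)⟫ := by
  obtain ⟨t, ht, y, hy, N, hN, hNy, -⟩ :=
    exists_path_pos ν (inter_mem hV (cap_mem_nhds x z hz))
  refine ⟨y, hy.1, ?_, hy.2⟩
  have h2 := congrArg (fun v => ⟪v, ν⟫) hNy
  simp only [real_inner_smul_left, inner_add_left, h0, zero_add] at h2
  have h3 : 0 < t * ⟪ν, ν⟫ := mul_pos ht (real_inner_self_pos.2 hν)
  rw [← h2] at h3
  exact pos_of_mul_pos_right h3 hN.le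

/-- If the boundary of `C` lies in the hyperplane `m^⊥` near `x`, then near `x` the set `C` is one
of the two closed half-caps, and every point of the hyperplane is a boundary point. -/
lemma exists_halfCap {n : ℕ} {C : Set (Sph n)} (hC : IsClosed C)
    (hS : C ⊆ closure (interior C)) {x : Sph n} (hx : x ∈ frontier C) {m : Esp n} (hm : ‖m‖ = 1)
    {k : ℝ} (hk0 : 0 ≤ k) (hk1 : k < 1)
    (hF : ∀ z ∈ frontier C, k < ⟪(z : Esp n), (x : Esp n)⟫ → ⟪(z : Esp n), m⟫ = 0) :
    ∃ ν : Esp n, ‖ν‖ = 1 ∧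
      (∀ z ∈ frontier C, k < ⟪(z : Esp n), (x : Esp n)⟫ → ⟪(z : Esp n), ν⟫ = 0) ∧
      (∀ z : Sph n, k < ⟪(z : Esp n), (x : Esp n)⟫ → 0 ≤ ⟪(z : Esp n), ν⟫ → z ∈ C) ∧
      (∀ z : Sph n, k < ⟪(z : Esp n), (x : Esp n)⟫ → ⟪(z : Esp n), ν⟫ = 0 → z ∈ frontier C) := by
  have hne : ∀ ν : Esp n, ‖ν‖ = 1 → ν ≠ 0 := by
    rintro ν h rfl; simp at h
  have hxx : k < ⟪(x : Esp n), (x : Esp n)⟫ := by rwa [inner_self_sph]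
  have dich : ∀ ν : Esp n,
      (∀ z ∈ frontier C, k < ⟪(z : Esp n), (x : Esp n)⟫ → ⟪(z : Esp n), ν⟫ = 0) →
      ((∀ z : Sph n, k < ⟪(z : Esp n), (x : Esp n)⟫ → 0 < ⟪(z : Esp n), ν⟫ → z ∈ C) ∨
      (∀ z : Sph n, k < ⟪(z : Esp n), (x : Esp n)⟫ → 0 < ⟪(z : Esp n), ν⟫ → z ∉ C)) := by
    intro ν hν
    exact (subset_or_of_isPreconnected hC (isPreconnected_halfCap x ν hk0) (by
      rintro z ⟨h1, h2⟩ hz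
      exact h1.ne' (hν z hz h2))).imp (fun h z h1 h2 => h ⟨h2, h1⟩) (fun h z h1 h2 => h ⟨h2, h1⟩)
  have clos : ∀ ν : Esp n, ‖ν‖ = 1 →
      (∀ z : Sph n, k < ⟪(z : Esp n), (x : Esp n)⟫ → 0 < ⟪(z : Esp n), ν⟫ → z ∈ C) →
      ∀ z : Sph n, k < ⟪(z : Esp n), (x : Esp n)⟫ → 0 ≤ ⟪(z : Esp n), ν⟫ → z ∈ C := by
    intro ν hν h z hz h0
    rcases h0.lt_or_eq with h0 | h0
    · exact h z hz h0
    · rw [← hC.closure_eq, mem_closure_iff_nhds]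
      intro W hW
      obtain ⟨y, hy, h1, h2⟩ := exists_halfSpace_pos (hne ν hν) hz h0.symm hW
      exact ⟨y, hy, h y h2 h1⟩
  have concl : ∀ ν : Esp n, ‖ν‖ = 1 →
      (∀ z ∈ frontier C, k < ⟪(z : Esp n), (x : Esp n)⟫ → ⟪(z : Esp n), ν⟫ = 0) →
      (∀ z : Sph n, k < ⟪(z : Esp n), (x : Esp n)⟫ → 0 < ⟪(z : Esp n), ν⟫ → z ∈ C) →
      (∀ z : Sph n, k < ⟪(z : Esp n), (x : Esp n)⟫ → 0 < ⟪(z : Esp n), -ν⟫ → z ∉ C) →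
      ∃ ν : Esp n, ‖ν‖ = 1 ∧
      (∀ z ∈ frontier C, k < ⟪(z : Esp n), (x : Esp n)⟫ → ⟪(z : Esp n), ν⟫ = 0) ∧
      (∀ z : Sph n, k < ⟪(z : Esp n), (x : Esp n)⟫ → 0 ≤ ⟪(z : Esp n), ν⟫ → z ∈ C) ∧
      (∀ z : Sph n, k < ⟪(z : Esp n), (x : Esp n)⟫ → ⟪(z : Esp n), ν⟫ = 0 → z ∈ frontier C) := by
    intro ν hν hFν h1 h2
    refine ⟨ν, hν, hFν, clos ν hν h1, fun z hz h0 => ⟨subset_closure (clos ν hν h1 z hz h0.ge), ?_⟩⟩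
    intro hzi
    obtain ⟨y, hy, h3, h4⟩ := exists_halfSpace_pos (ν := -ν) (neg_ne_zero.2 (hne ν hν)) hz
      (by rw [inner_neg_right, h0, neg_zero]) (mem_interior_iff_mem_nhds.1 hzi)
    exact h2 y h4 h3 hy
  have hFn : ∀ z ∈ frontier C, k < ⟪(z : Esp n), (x : Esp n)⟫ → ⟪(z : Esp n), -m⟫ = 0 := by
    intro z hz hz2
    rw [inner_neg_right, hF z hz hz2, neg_zero]
  have hmn : ‖-m‖ = 1 := by rwa [norm_neg]
  rcases dich m hF with h1 | h1 <;> rcases dich (-m) hFn with h2 | h2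
  · exfalso
    refine hx.2 (mem_interior_iff_mem_nhds.2 (mem_of_superset (cap_mem_nhds x x hxx) ?_))
    intro z hz
    rcases le_total 0 ⟪(z : Esp n), m⟫ with h | h
    · exact clos m hm h1 z hz h
    · exact clos (-m) hmn h2 z hz (by rw [inner_neg_right]; linarith)
  · exact concl m hm hF h1 h2
  · exact concl (-m) hmn hFn h2 (by simpa using h1)
  · exfalso
    obtain ⟨z, hz, hzi⟩ := mem_closure_iff_nhds.1 (hS (hC.frontier_subset hx)) _
      (cap_mem_nhds x x hxx)
    have hzC := interior_subset hzi
    have h0 : ⟪(z : Esp n), m⟫ = 0 := by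
      refine le_antisymm ?_ ?_
      · by_contra! h
        exact h1 z hz h hzC
      · by_contra! h
        exact h2 z hz (by rw [inner_neg_right]; linarith) hzC
    obtain ⟨y, hy, h3, h4⟩ := exists_halfSpace_pos (hne m hm) hz h0
      (mem_interior_iff_mem_nhds.1 hzi)
    exact h1 y h4 h3 hy

/-! ### First-variation arguments at points of distance `D` -/

lemma nonneg_of_eventually_quadratic {a b : ℝ}
    (h : ∀ᶠ t in 𝓝[>] (0 : ℝ), 0 ≤ a * t + b * t ^ 2) : 0 ≤ a := by
  have hl : Tendsto (fun t : ℝ => a + b * t) (𝓝[>] 0) (𝓝 a) := by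
    have : Continuous fun t : ℝ => a + b * t := by fun_prop
    simpa using (this.tendsto 0).mono_left nhdsWithin_le_nhds
  refine ge_of_tendsto hl ?_
  filter_upwards [h, self_mem_nhdsWithin] with t ht ht0
  have ht0 : 0 < t := ht0
  by_contra! hc
  nlinarith [mul_neg_of_neg_of_pos hc ht0]

/-- A point of `C` at distance `D` from another point of `C` cannot be interior. -/
lemma mem_frontier_of_inner_eq {n : ℕ} {C : Set (Sph n)} {c : ℝ} (hc0 : 0 < c) (hc1 : c < 1)
    (hd : ∀ x ∈ C, ∀ y ∈ C, -c ≤ ⟪(x : Esp n), (y : Esp n)⟫) {x w : Sph n} (hx : x ∈ C)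
    (hw : w ∈ C) (h : ⟪(x : Esp n), (w : Esp n)⟫ = -c) : x ∈ frontier C := by
  refine ⟨subset_closure hx, fun hi => ?_⟩
  obtain ⟨z, hz, hz2⟩ := exists_farther hc0 hc1 h (mem_interior_iff_mem_nhds.1 hi)
  exact absurd (hd z hz w hw) (not_le.2 hz2)

/-- Where `C` contains a half-cap bounded by `ν^⊥`, a point of `C` at distance `D = arccos (-c)`
from a point `x` of the bounding hyperplane lies on the normal geodesic at `x`. -/
lemma eq_of_inner_eq {n : ℕ} {C : Set (Sph n)} {c s : ℝ} (hc0 : 0 < c) (hs0 : 0 < s)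
    (hcs : c ^ 2 + s ^ 2 = 1)
    (hd : ∀ x ∈ C, ∀ y ∈ C, -c ≤ ⟪(x : Esp n), (y : Esp n)⟫)
    {x₀ : Sph n} {k : ℝ} {ν : Esp n} (hν : ‖ν‖ = 1)
    (hH : ∀ z : Sph n, k < ⟪(z : Esp n), (x₀ : Esp n)⟫ → 0 ≤ ⟪(z : Esp n), ν⟫ → z ∈ C)
    {x w : Sph n} (hx : k < ⟪(x : Esp n), (x₀ : Esp n)⟫) (hxν : ⟪(x : Esp n), ν⟫ = 0)
    (hw : w ∈ C) (h : ⟪(x : Esp n), (w : Esp n)⟫ = -c) :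
    (w : Esp n) = -c • (x : Esp n) + s • ν := by
  have var : ∀ u : Esp n, ⟪(x : Esp n), u⟫ = 0 → 0 ≤ ⟪u, ν⟫ → 0 ≤ ⟪u, (w : Esp n)⟫ := by
    intro u hu0 hu1
    refine nonneg_of_eventually_quadratic (b := c * ‖u‖ ^ 2 / 2) ?_
    filter_upwards [(eventually_path u (cap_mem_nhds x₀ x hx)).filter_mono nhdsWithin_le_nhds,
      self_mem_nhdsWithin] with t ht ht0
    have ht0 : 0 < t := ht0
    obtain ⟨z, hz, N, hN, hNz, hN2⟩ := ht
    have e1 := congrArg (fun v => ⟪v, ν⟫) hNz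
    have e2 := congrArg (fun v => ⟪v, (w : Esp n)⟫) hNz
    simp only [real_inner_smul_left, inner_add_left, hxν, zero_add, h] at e1 e2
    have hzν : 0 ≤ ⟪(z : Esp n), ν⟫ := by
      have : 0 ≤ N * ⟪(z : Esp n), ν⟫ := by rw [e1]; positivity
      exact nonneg_of_mul_nonneg_right this hN
    have h3 := mul_le_mul_of_nonneg_left (hd z (hH z hz hzν) w hw) hN.le
    rw [hu0] at hN2
    have h4 : N ≤ 1 + t ^ 2 * ‖u‖ ^ 2 / 2 := by nlinarith [sq_nonneg (N - 1)]
    nlinarith [mul_le_mul_of_nonneg_left h4 hc0.le]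
  have hνν : ⟪ν, ν⟫ = 1 := by rw [real_inner_self_eq_norm_sq, hν, one_pow]
  set b := ⟪ν, (w : Esp n)⟫ with hb
  have hb0 : 0 ≤ b := var ν hxν (by rw [hνν]; norm_num)
  have hxw : ⟪(w : Esp n), (x : Esp n)⟫ = -c := by rw [real_inner_comm]; exact h
  have hwν : ⟪(w : Esp n), ν⟫ = b := by rw [hb, real_inner_comm]
  have hνx : ⟪ν, (x : Esp n)⟫ = 0 := by rw [real_inner_comm]; exact hxν
  have hzero : (w : Esp n) + c • (x : Esp n) - b • ν = 0 := by
    have h1 := var (-((w : Esp n) + c • (x : Esp n) - b • ν)) (by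
      simp only [inner_neg_right, inner_sub_right, inner_add_right, inner_smul_right,
        inner_self_sph, h, hxν]; ring) (by
      simp only [inner_neg_left, inner_sub_left, inner_add_left, real_inner_smul_left,
        hwν, hxν, hνν]; simp)
    have h2 : ⟪(w : Esp n) + c • (x : Esp n) - b • ν, (w : Esp n) + c • (x : Esp n) - b • ν⟫ ≤ 0 := by
      simp only [inner_neg_left, inner_sub_left, inner_add_left, real_inner_smul_left,
        inner_sub_right, inner_add_right, inner_smul_right,
        inner_self_sph, h, hxw, hxν, hνx, hνν, hwν, ← hb] at h1 ⊢
      linarith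
    exact inner_self_eq_zero.1 (le_antisymm h2 real_inner_self_nonneg)
  have hw' : (w : Esp n) = -c • (x : Esp n) + b • ν := by
    have h1 : (w : Esp n) = ((w : Esp n) + c • (x : Esp n) - b • ν) + (-c • (x : Esp n) + b • ν) := by
      module
    rwa [hzero, zero_add] at h1
  have h1 := inner_self_sph w
  rw [hw'] at h1
  simp only [inner_add_left, real_inner_smul_left, inner_add_right, inner_smul_right,
    inner_self_sph, hxν, hνx, hνν] at h1
  have : b = s := by nlinarith
  rw [hw', this]

/-- If `C` contains all the points `-c x + s ν`, `x` in the hyperplane `ν^⊥` near `x₀`, then the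
points of `C` at distance `D` from such a point lie on the normal geodesic, so there are two
candidates. -/
lemma eq_or_eq_of_inner_eq {n : ℕ} {C : Set (Sph n)} {c s : ℝ} (hs0 : 0 < s)
    (hc0 : 0 < c) (hcs : c ^ 2 + s ^ 2 = 1)
    (hd : ∀ x ∈ C, ∀ y ∈ C, -c ≤ ⟪(x : Esp n), (y : Esp n)⟫)
    {x₀ : Sph n} {k : ℝ} {ν : Esp n} (hν : ‖ν‖ = 1)
    (hA : ∀ x : Sph n, k < ⟪(x : Esp n), (x₀ : Esp n)⟫ → ⟪(x : Esp n), ν⟫ = 0 →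
      ∃ y ∈ C, (y : Esp n) = -c • (x : Esp n) + s • ν)
    {x w : Sph n} (hx : k < ⟪(x : Esp n), (x₀ : Esp n)⟫) (hxν : ⟪(x : Esp n), ν⟫ = 0)
    (hw : w ∈ C) (h : ⟪-c • (x : Esp n) + s • ν, (w : Esp n)⟫ = -c) :
    w = x ∨ (w : Esp n) = (2 * c ^ 2 - 1) • (x : Esp n) - (2 * c * s) • ν := by
  have hνν : ⟪ν, ν⟫ = 1 := by rw [real_inner_self_eq_norm_sq, hν, one_pow]
  have hνx : ⟪ν, (x : Esp n)⟫ = 0 := by rw [real_inner_comm]; exact hxν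
  set α := ⟪(x : Esp n), (w : Esp n)⟫ with hα
  set β := ⟪ν, (w : Esp n)⟫ with hβ
  have hwx : ⟪(w : Esp n), (x : Esp n)⟫ = α := by rw [hα, real_inner_comm]
  have hwν : ⟪(w : Esp n), ν⟫ = β := by rw [hβ, real_inner_comm]
  rw [inner_add_left, real_inner_smul_left, real_inner_smul_left, ← hα, ← hβ] at h
  have hα1 : |α| ≤ 1 := abs_le.2 ⟨inner_neg_one_le _ _, inner_le_one _ _⟩
  set u := (w : Esp n) - α • (x : Esp n) - β • ν with hu
  have hxu : ⟪(x : Esp n), u⟫ = 0 := by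
    simp only [hu, inner_sub_right, inner_smul_right, inner_self_sph, ← hα, hxν]; ring
  have huν : ⟪u, ν⟫ = 0 := by
    simp only [hu, inner_sub_left, real_inner_smul_left, hwν, hνν, hxν]; ring
  have hνu : ⟪ν, u⟫ = 0 := by rw [real_inner_comm]; exact huν
  have hux : ⟪u, (x : Esp n)⟫ = 0 := by rw [real_inner_comm]; exact hxu
  have hwu : (w : Esp n) = u + α • (x : Esp n) + β • ν := by rw [hu]; module
  have huw : ⟪u, (w : Esp n)⟫ = ‖u‖ ^ 2 := by
    rw [hwu, inner_add_right, inner_add_right, inner_smul_right, inner_smul_right, huν, hux,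
      real_inner_self_eq_norm_sq]
    ring
  have h0 : 0 ≤ -‖u‖ ^ 2 := by
    refine nonneg_of_eventually_quadratic (b := ‖u‖ ^ 2 / 2) ?_
    filter_upwards [(eventually_path u (cap_mem_nhds x₀ x hx)).filter_mono nhdsWithin_le_nhds,
      self_mem_nhdsWithin] with t ht ht0
    have ht0 : 0 < t := ht0
    obtain ⟨z, hz, N, hN, hNz, hN2⟩ := ht
    have e1 := congrArg (fun v => ⟪v, ν⟫) hNz
    have e2 := congrArg (fun v => ⟪v, (w : Esp n)⟫) hNz
    simp only [real_inner_smul_left, inner_add_left, hxν, huν, huw, ← hα, mul_zero, add_zero,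
      mul_eq_zero, hN.ne', false_or] at e1 e2
    obtain ⟨y, hy, hye⟩ := hA z hz e1
    have h3 := hd y hy w hw
    rw [hye, inner_add_left, real_inner_smul_left, real_inner_smul_left, ← hβ] at h3
    have h4 : ⟪(z : Esp n), (w : Esp n)⟫ ≤ α := by
      by_contra! hc
      nlinarith [mul_lt_mul_of_pos_left hc hc0]
    have h5 := mul_le_mul_of_nonneg_left h4 hN.le
    rw [hxu] at hN2
    have h6 : N ≤ 1 + t ^ 2 * ‖u‖ ^ 2 / 2 := by nlinarith [sq_nonneg (N - 1)]
    have h7 : 1 ≤ N := by nlinarith [mul_nonneg (sq_nonneg t) (sq_nonneg ‖u‖)]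
    have h8 : (N - 1) * α ≤ (N - 1) * 1 :=
      mul_le_mul_of_nonneg_left (abs_le.1 hα1).2 (by linarith)
    linarith
  have hu0 : u = 0 := by
    have : ‖u‖ ^ 2 = 0 := le_antisymm (by linarith) (sq_nonneg _)
    exact norm_eq_zero.1 (pow_eq_zero_iff (two_ne_zero) |>.1 this)
  have hw2 : (w : Esp n) = α • (x : Esp n) + β • ν := by
    rwa [hu0, zero_add] at hwu
  have h1 := inner_self_sph w
  rw [hw2] at h1
  simp only [inner_add_left, real_inner_smul_left, inner_add_right, inner_smul_right,
    inner_self_sph, hxν, hνx, hνν] at h1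
  have hβ2 : s * β = c * (α - 1) := by linarith
  have hprod : (α - 1) * (α - (2 * c ^ 2 - 1)) = 0 := by
    have : s ^ 2 * (α ^ 2 - 1) + (s * β) ^ 2 = 0 := by linear_combination s ^ 2 * h1
    rw [hβ2] at this
    linear_combination this - (α ^ 2 - 1) * hcs
  rcases mul_eq_zero.1 hprod with h2 | h2
  · left
    have hα' : α = 1 := by linarith
    have hβ' : β = 0 := by
      rw [hα', sub_self, mul_zero] at hβ2
      exact (mul_eq_zero.1 hβ2).resolve_left hs0.ne'
    apply Subtype.ext
    rw [hw2, hα', hβ']; simp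
  · right
    have hα' : α = 2 * c ^ 2 - 1 := by linarith
    have hβ' : β = -(2 * c * s) := by
      apply mul_left_cancel₀ hs0.ne'
      rw [hβ2, hα']; linear_combination 2 * c * hcs
    rw [hw2, hα', hβ']; module

/-- If `C` contains the half-cap at `x₀`, the point `-c x₀ + s ν` and all the second candidates
`(2c² - 1) x - 2cs ν` for `x` in the hyperplane `ν^⊥` near `x₀`, then `C` is squeezed into a
hypersurface near `-c x₀ + s ν`, so it is not the closure of its interior. -/
lemma false_of_second_points {n : ℕ} {C : Set (Sph n)} {c s : ℝ} (hs0 : 0 < s)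
    (hc0 : 0 < c) (hcs : c ^ 2 + s ^ 2 = 1) (hS : C ⊆ closure (interior C))
    (hd : ∀ x ∈ C, ∀ y ∈ C, -c ≤ ⟪(x : Esp n), (y : Esp n)⟫)
    {x₀ : Sph n} {k : ℝ} (hk1 : k < 1) {ν : Esp n} (hν : ‖ν‖ = 1)
    (hx₀ν : ⟪(x₀ : Esp n), ν⟫ = 0)
    (hH : ∀ z : Sph n, k < ⟪(z : Esp n), (x₀ : Esp n)⟫ → 0 ≤ ⟪(z : Esp n), ν⟫ → z ∈ C)
    {y₀ : Sph n} (hy₀ : y₀ ∈ C) (hy₀e : (y₀ : Esp n) = -c • (x₀ : Esp n) + s • ν)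
    (hB : ∀ x : Sph n, k < ⟪(x : Esp n), (x₀ : Esp n)⟫ → ⟪(x : Esp n), ν⟫ = 0 →
      ∃ w ∈ C, (w : Esp n) = (2 * c ^ 2 - 1) • (x : Esp n) - (2 * c * s) • ν) : False := by
  have hc1 : c < 1 := by nlinarith
  have hνν : ⟪ν, ν⟫ = 1 := by rw [real_inner_self_eq_norm_sq, hν, one_pow]
  have hνx : ⟪ν, (x₀ : Esp n)⟫ = 0 := by rw [real_inner_comm]; exact hx₀ν
  have hb₀ : ⟪(y₀ : Esp n), ν⟫ = s := by
    rw [hy₀e, inner_add_left, real_inner_smul_left, real_inner_smul_left, hx₀ν, hνν]; ring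
  have hq₀ : (y₀ : Esp n) - ⟪(y₀ : Esp n), ν⟫ • ν = -c • (x₀ : Esp n) := by
    rw [hb₀, hy₀e]; module
  have ha₀ : ‖(y₀ : Esp n) - ⟪(y₀ : Esp n), ν⟫ • ν‖ = c := by
    rw [hq₀, norm_smul, norm_sph, mul_one, norm_neg, Real.norm_of_nonneg hc0.le]
  have n1 : ∀ᶠ z : Sph n in 𝓝 y₀,
      k * ‖(z : Esp n) - ⟪(z : Esp n), ν⟫ • ν‖ < -⟪(z : Esp n), (x₀ : Esp n)⟫ := by
    refine IsOpen.mem_nhds (isOpen_lt (by fun_prop) (by fun_prop)) ?_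
    change k * ‖(y₀ : Esp n) - ⟪(y₀ : Esp n), ν⟫ • ν‖ < -⟪(y₀ : Esp n), (x₀ : Esp n)⟫
    rw [ha₀, hy₀e, inner_add_left, real_inner_smul_left, real_inner_smul_left, hνx, inner_self_sph]
    nlinarith
  have n2 : ∀ᶠ z : Sph n in 𝓝 y₀, 0 < 2 * c * s * (c + ‖(z : Esp n) - ⟪(z : Esp n), ν⟫ • ν‖)
      - (2 * c ^ 2 - 1) * (⟪(z : Esp n), ν⟫ + s) := by
    refine IsOpen.mem_nhds (isOpen_lt (by fun_prop) (by fun_prop)) ?_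
    change 0 < 2 * c * s * (c + ‖(y₀ : Esp n) - ⟪(y₀ : Esp n), ν⟫ • ν‖)
      - (2 * c ^ 2 - 1) * (⟪(y₀ : Esp n), ν⟫ + s)
    rw [ha₀, hb₀]
    ring_nf
    linarith
  have n3 : ∀ᶠ z : Sph n in 𝓝 y₀, 0 < ⟪(z : Esp n), ν⟫ := by
    refine IsOpen.mem_nhds (isOpen_lt (by fun_prop) (by fun_prop)) ?_
    change 0 < ⟪(y₀ : Esp n), ν⟫
    rwa [hb₀]
  obtain ⟨z, ⟨h1, h2, h3⟩, hzi⟩ := mem_closure_iff_nhds.1 (hS hy₀) _ (n1.and (n2.and n3))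
  have hzC := interior_subset hzi
  set b := ⟪(z : Esp n), ν⟫ with hb
  set q := (z : Esp n) - b • ν with hq
  set a := ‖q‖ with ha
  have hqν : ⟪q, ν⟫ = 0 := by rw [hq, inner_sub_left, real_inner_smul_left, hνν, ← hb]; ring
  have hqx : ⟪q, (x₀ : Esp n)⟫ = ⟪(z : Esp n), (x₀ : Esp n)⟫ := by
    rw [hq, inner_sub_left, real_inner_smul_left, hνx]; ring
  have ha0 : 0 < a := by
    rw [ha, norm_pos_iff]
    intro h
    rw [← hqx, ha, h] at h1
    simp at h1
  have hze : (z : Esp n) = q + b • ν := by rw [hq]; module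
  have hab : a ^ 2 + b ^ 2 = 1 := by
    have h4 := inner_self_sph z
    rw [hze, inner_add_left, inner_add_right, inner_add_right, real_inner_smul_left,
      real_inner_smul_left, inner_smul_right, inner_smul_right, hqν, real_inner_comm q ν, hqν, hνν,
      real_inner_self_eq_norm_sq, ← ha] at h4
    linarith
  obtain ⟨p, hpe⟩ : ∃ p : Sph n, (p : Esp n) = (-a⁻¹) • q := ⟨⟨(-a⁻¹) • q, by
    rw [mem_sphere_zero_iff_norm, norm_smul, norm_neg, norm_inv, ← ha, Real.norm_of_nonneg ha0.le,
      inv_mul_cancel₀ ha0.ne']⟩, rfl⟩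
  have hpν : ⟪(p : Esp n), ν⟫ = 0 := by rw [hpe, real_inner_smul_left, hqν, mul_zero]
  have hpk : k < ⟪(p : Esp n), (x₀ : Esp n)⟫ := by
    rw [hpe, real_inner_smul_left, hqx, neg_mul, ← mul_neg, inv_mul_eq_div, lt_div_iff₀ ha0]
    exact h1
  have hpz : ⟪(z : Esp n), (p : Esp n)⟫ = -a := by
    rw [hpe, hze, inner_smul_right, inner_add_left, real_inner_smul_left, real_inner_comm q ν, hqν,
      real_inner_self_eq_norm_sq, ← ha]
    field_simp; ring
  have hpC := hH p hpk hpν.ge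
  have hac : a < c := by
    have h4 := hd z hzC p hpC
    rw [hpz] at h4
    refine lt_of_le_of_ne (by linarith) fun h5 => ?_
    exact (mem_frontier_of_inner_eq hc0 hc1 hd hzC hpC (by rw [hpz, h5])).2 hzi
  obtain ⟨w, hw, hwe⟩ := hB p hpk hpν
  have h4 := hd z hzC w hw
  rw [hwe, inner_sub_right, inner_smul_right, inner_smul_right, hpz, ← hb] at h4
  have h5 : (2 * c ^ 2 - 1) * (a - c) + 2 * c * s * (b - s) ≤ 0 := by
    have : c = c * (2 * c ^ 2 - 1) + 2 * c * s * s := by linear_combination (-2 * c) * hcs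
    nlinarith
  have h6 : (b - s) * (b + s) = (c - a) * (c + a) := by linear_combination hab - hcs
  have h7 := mul_nonpos_of_nonpos_of_nonneg h5 (by linarith : 0 ≤ b + s)
  have h8 : (c - a) * (2 * c * s * (c + a) - (2 * c ^ 2 - 1) * (b + s)) ≤ 0 := by
    refine le_of_eq_of_le ?_ h7
    linear_combination (-2 * c * s) * h6
  have h9 := mul_pos (sub_pos.2 hac) h2
  linarith

/-- For `x` in the hyperplane `ν^⊥` near `x₃`, the points `-c x + s ν` fill a piece of a small
sphere, which lies in no linear hyperplane. This is where `n ≥ 2` enters. -/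
lemma eq_zero_of_small_sphere {n : ℕ} (hn : 2 ≤ n) {c s : ℝ} (hs0 : 0 < s) (hc0 : 0 < c)
    {x₃ : Sph n} {ν m : Esp n} (hx₃ : ⟪(x₃ : Esp n), ν⟫ = 0) {W : Set (Sph n)} (hW : W ∈ 𝓝 x₃)
    (h : ∀ x ∈ W, ⟪(x : Esp n), ν⟫ = 0 → ⟪-c • (x : Esp n) + s • ν, m⟫ = 0) : m = 0 := by
  set e := ⟪(x₃ : Esp n), m⟫ with he
  have hfix : ∀ x ∈ W, ⟪(x : Esp n), ν⟫ = 0 → ⟪(x : Esp n), m⟫ = e := by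
    intro x hx hxν
    have h1 := h x hx hxν
    have h2 := h x₃ (mem_of_mem_nhds hW) hx₃
    rw [inner_add_left, real_inner_smul_left, real_inner_smul_left] at h1 h2
    apply mul_left_cancel₀ hc0.ne'
    linarith
  have hev : ∀ u : Esp n, ⟪(x₃ : Esp n), u⟫ = 0 → ⟪u, ν⟫ = 0 → ∀ᶠ t in 𝓝[>] (0 : ℝ),
      e + t * ⟪u, m⟫ = √(1 + t ^ 2 * ‖u‖ ^ 2) * e := by
    intro u hu1 hu2
    filter_upwards [(eventually_path u hW).filter_mono nhdsWithin_le_nhds] with t ht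
    obtain ⟨z, hz, N, hN, hNz, hN2⟩ := ht
    have e1 := congrArg (fun v => ⟪v, ν⟫) hNz
    have e2 := congrArg (fun v => ⟪v, m⟫) hNz
    simp only [real_inner_smul_left, inner_add_left, hx₃, hu2, ← he, mul_zero, add_zero,
      mul_eq_zero, hN.ne', false_or] at e1 e2
    rw [hu1, mul_zero, add_zero] at hN2
    rw [← hN2, Real.sqrt_sq hN.le, ← e2, hfix z hz e1]
  have hpos : ∀ᶠ t in 𝓝[>] (0 : ℝ), 0 < t := self_mem_nhdsWithin
  obtain ⟨u, hu0, hu1, hu2⟩ : ∃ u : Esp n, u ≠ 0 ∧ ⟪(x₃ : Esp n), u⟫ = 0 ∧ ⟪u, ν⟫ = 0 := by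
    let K : Submodule ℝ (Esp n) := Submodule.span ℝ {(x₃ : Esp n), ν}
    have hK : Module.finrank ℝ K ≤ 2 := by
      refine (finrank_span_le_card _).trans ?_
      rw [Set.toFinset_insert, Set.toFinset_singleton]
      exact Finset.card_le_two
    have h1 := Submodule.finrank_add_finrank_orthogonal K
    have h2 : Module.finrank ℝ (Esp n) = n + 1 := by simp
    have h3 : Kᗮ ≠ ⊥ := by
      intro hbot
      rw [hbot, finrank_bot] at h1
      omega
    obtain ⟨u, hu, hu0⟩ := Submodule.exists_mem_ne_zero_of_ne_bot h3
    refine ⟨u, hu0, ?_, ?_⟩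
    · exact (Submodule.mem_orthogonal K u).1 hu _ (Submodule.subset_span (by simp))
    · exact (Submodule.mem_orthogonal' K u).1 hu _ (Submodule.subset_span (by simp))
  have he0 : e = 0 := by
    obtain ⟨t, ht, h1, h2⟩ := (hpos.and ((hev u hu1 hu2).and (hev (-u) (by
      rw [inner_neg_right, hu1, neg_zero]) (by rw [inner_neg_left, hu2, neg_zero])))).exists
    rw [inner_neg_left, norm_neg] at h2
    have h3 : (√(1 + t ^ 2 * ‖u‖ ^ 2) - 1) * e = 0 := by linarith
    have h4 : 1 < √(1 + t ^ 2 * ‖u‖ ^ 2) := by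
      rw [Real.lt_sqrt zero_le_one]
      have : 0 < ‖u‖ := norm_pos_iff.2 hu0
      nlinarith [mul_pos (pow_pos ht 2) (pow_pos this 2)]
    exact (mul_eq_zero.1 h3).resolve_left (by linarith)
  have hνm : ⟪ν, m⟫ = 0 := by
    have h2 := h x₃ (mem_of_mem_nhds hW) hx₃
    rw [inner_add_left, real_inner_smul_left, real_inner_smul_left, ← he, he0, mul_zero,
      zero_add] at h2
    exact (mul_eq_zero.1 h2).resolve_left hs0.ne'
  obtain ⟨t, ht, h1⟩ := (hpos.and (hev m (he ▸ he0) (by rw [real_inner_comm]; exact hνm))).exists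
  rw [he0, zero_add, mul_zero] at h1
  exact inner_self_eq_zero.1 ((mul_eq_zero.1 h1).resolve_left ht.ne')

/-! ### The contradiction and the extremality of `D`-maximal sets -/

/-- If `C` has diameter at most `D = arccos (-c)` and every boundary point of `C` is at distance `D` from a
point of `C`, then the boundary cannot be contained in a hyperplane near every strongly regular point. -/
lemma false_of_locally_flat {n : ℕ} (hn : 2 ≤ n) {C : Set (Sph n)} (hC : IsClosed C)
    (hS : C ⊆ closure (interior C)) (hne : (frontier C).Nonempty) {c s : ℝ} (hs0 : 0 < s)
    (hc0 : 0 < c) (hcs : c ^ 2 + s ^ 2 = 1)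
    (hd : ∀ x ∈ C, ∀ y ∈ C, -c ≤ ⟪(x : Esp n), (y : Esp n)⟫)
    (hE : ∀ x ∈ frontier C, ∃ w ∈ C, ⟪(x : Esp n), (w : Esp n)⟫ = -c)
    (hflat : ∀ x, StronglyRegular C x → ∃ m : Esp n, ‖m‖ = 1 ∧ ∃ V ∈ 𝓝 x,
      ∀ y ∈ frontier C, y ∈ V → ⟪(y : Esp n), m⟫ = 0) : False := by
  have hc1 : c < 1 := by nlinarith
  obtain ⟨x', hx'⟩ := hne
  obtain ⟨x₀, -, hx₀⟩ := exists_stronglyRegular hC hS hx' univ_mem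
  obtain ⟨m₀, hm₀, V₀, hV₀, hmV₀⟩ := hflat x₀ hx₀
  obtain ⟨k, hk0, hk1, hkV⟩ := exists_cap_subset hV₀
  obtain ⟨ν, hν, hF, hH, hP⟩ := exists_halfCap hC hS hx₀.1 hm₀ hk0 hk1
    (fun z hz hz2 => hmV₀ z hz (hkV z hz2))
  have hxx : k < ⟪(x₀ : Esp n), (x₀ : Esp n)⟫ := by rwa [inner_self_sph]
  have hνν : ⟪ν, ν⟫ = 1 := by rw [real_inner_self_eq_norm_sq, hν, one_pow]
  have hx₀ν := hF x₀ hx₀.1 hxx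
  have hA : ∀ x : Sph n, k < ⟪(x : Esp n), (x₀ : Esp n)⟫ → ⟪(x : Esp n), ν⟫ = 0 →
      ∃ y ∈ C, (y : Esp n) = -c • (x : Esp n) + s • ν := by
    intro x hx hxν
    obtain ⟨w, hw, hxw⟩ := hE x (hP x hx hxν)
    exact ⟨w, hw, eq_of_inner_eq hc0 hs0 hcs hd hν hH hx hxν hw hxw⟩
  have hAF : ∀ x y : Sph n, k < ⟪(x : Esp n), (x₀ : Esp n)⟫ → ⟪(x : Esp n), ν⟫ = 0 → y ∈ C →
      (y : Esp n) = -c • (x : Esp n) + s • ν → y ∈ frontier C := by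
    intro x y hx hxν hy hye
    refine mem_frontier_of_inner_eq hc0 hc1 hd hy (hH x hx hxν.ge) ?_
    rw [hye, inner_add_left, real_inner_smul_left, real_inner_smul_left, inner_self_sph,
      real_inner_comm, hxν]
    ring
  by_cases hB : ∀ x : Sph n, k < ⟪(x : Esp n), (x₀ : Esp n)⟫ → ⟪(x : Esp n), ν⟫ = 0 →
      ∃ w ∈ C, (w : Esp n) = (2 * c ^ 2 - 1) • (x : Esp n) - (2 * c * s) • ν
  · obtain ⟨y₀, hy₀, hy₀e⟩ := hA x₀ hxx hx₀ν
    exact false_of_second_points hs0 hc0 hcs hS hd hk1 hν hx₀ν hH hy₀ hy₀e hB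
  · push Not at hB
    obtain ⟨x₁, hx₁, hx₁ν, hno⟩ := hB
    obtain ⟨y₁, hy₁, hy₁e⟩ := hA x₁ hx₁ hx₁ν
    have hy₁F := hAF x₁ y₁ hx₁ hx₁ν hy₁ hy₁e
    have hK : IsCompact (C ∩ {w : Sph n | ⟪(w : Esp n), (x₀ : Esp n)⟫ ≤ k}) :=
      (hC.inter (isClosed_le (by fun_prop) continuous_const)).isCompact
    have hV : ∀ᶠ z : Sph n in 𝓝 y₁, ∀ w ∈ C ∩ {w : Sph n | ⟪(w : Esp n), (x₀ : Esp n)⟫ ≤ k},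
        ⟪(z : Esp n), (w : Esp n)⟫ ≠ -c := by
      refine hK.eventually_forall_of_forall_eventually fun w hw => ?_
      have hcont : Continuous fun q : Sph n × Sph n => ⟪(q.1 : Esp n), (q.2 : Esp n)⟫ := by
        fun_prop
      refine hcont.continuousAt.eventually_ne fun h => ?_
      rw [hy₁e] at h
      rcases eq_or_eq_of_inner_eq hs0 hc0 hcs hd hν hA hx₁ hx₁ν hw.1 h with h1 | h1
      · subst h1
        exact absurd hx₁ (not_lt.2 hw.2)
      · exact hno w hw.1 h1
    obtain ⟨x₂, hx₂V, hx₂⟩ := exists_stronglyRegular hC hS hy₁F hV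
    obtain ⟨x₃, hx₃C, hx₃⟩ := hE x₂ hx₂.1
    have hx₂C := hC.frontier_subset hx₂.1
    have hx₃k : k < ⟪(x₃ : Esp n), (x₀ : Esp n)⟫ := by
      by_contra! h
      exact hx₂V x₃ ⟨hx₃C, h⟩ hx₃
    have hx₃' : ⟪(x₃ : Esp n), (x₂ : Esp n)⟫ = -c := by rw [real_inner_comm]; exact hx₃
    have hx₃F := mem_frontier_of_inner_eq hc0 hc1 hd hx₃C hx₂C hx₃'
    have hx₃ν := hF x₃ hx₃F hx₃k
    have hx₂e := eq_of_inner_eq hc0 hs0 hcs hd hν hH hx₃k hx₃ν hx₂C hx₃'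
    obtain ⟨m, hm, V, hV, hmV⟩ := hflat x₂ hx₂
    obtain ⟨O, hO, hOV⟩ := mem_nhds_induced _ _ _ |>.1 hV
    have hcont : Continuous fun x : Sph n => -c • (x : Esp n) + s • ν := by fun_prop
    have hO' : (fun x : Sph n => -c • (x : Esp n) + s • ν) ⁻¹' O ∈ 𝓝 x₃ := by
      refine hcont.continuousAt ?_
      rw [← hx₂e]; exact hO
    have := eq_zero_of_small_sphere hn hs0 hc0 hx₃ν (m := m)
      (inter_mem hO' (cap_mem_nhds x₀ x₃ hx₃k)) (by
        rintro x ⟨hxO, hxk⟩ hxν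
        obtain ⟨y, hy, hye⟩ := hA x hxk hxν
        rw [← hye]
        refine hmV y (hAF x y hxk hxν hy hye) (hOV ?_)
        change (y : Esp n) ∈ O
        rw [hye]; exact hxO)
    rw [this] at hm
    simp at hm

lemma gd_le_iff {n : ℕ} {D : ℝ} (h0 : 0 ≤ D) (h1 : D ≤ Real.pi) (x y : Sph n) :
    gd x y ≤ D ↔ Real.cos D ≤ ⟪(x : Esp n), (y : Esp n)⟫ := by
  have h2 : Real.cos (gd x y) = ⟪(x : Esp n), (y : Esp n)⟫ :=
    Real.cos_arccos (inner_neg_one_le _ _) (inner_le_one _ _)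
  rw [← h2]
  exact (Real.strictAntiOn_cos.le_iff_ge
    (show D ∈ Set.Icc 0 Real.pi from ⟨h0, h1⟩)
    (show gd x y ∈ Set.Icc 0 Real.pi from ⟨Real.arccos_nonneg _, Real.arccos_le_pi _⟩)).symm

lemma sphDiam_le_iff {n : ℕ} {D : ℝ} (h0 : 0 ≤ D) (h1 : D ≤ Real.pi) {X : Set (Sph n)}
    (hX : X.Nonempty) : sphDiam X ≤ D ↔
      ∀ x ∈ X, ∀ y ∈ X, Real.cos D ≤ ⟪(x : Esp n), (y : Esp n)⟫ := by
  constructor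
  · intro h x hx y hy
    rw [← gd_le_iff h0 h1]
    have hb : BddAbove {r | ∃ x ∈ X, ∃ y ∈ X, r = gd x y} := by
      refine ⟨Real.pi, ?_⟩
      rintro r ⟨x, -, y, -, rfl⟩
      exact Real.arccos_le_pi _
    exact (le_csSup hb ⟨x, hx, y, hy, rfl⟩).trans h
  · intro h
    obtain ⟨x, hx⟩ := hX
    refine csSup_le ⟨_, x, hx, x, hx, rfl⟩ ?_
    rintro r ⟨x, hx, y, hy, rfl⟩
    exact (gd_le_iff h0 h1 x y).2 (h x hx y hy)

/-- Every boundary point of a `D`-maximal set has distance `D` from some point of the set: otherwise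
a small ball around it could be added without exceeding the diameter `D`. -/
lemma exists_inner_eq {n : ℕ} {D : ℝ} (hD0 : Real.pi / 2 < D) (hD1 : D < Real.pi)
    {C : Set (Sph n)} (hC : DMaximal n D C) (hne : C.Nonempty) {x : Sph n} (hx : x ∈ frontier C) :
    ∃ w ∈ C, ⟪(x : Esp n), (w : Esp n)⟫ = Real.cos D := by
  have hpi := Real.pi_pos
  obtain ⟨hcomp, hdiam, hmax⟩ := hC
  have hcl := hcomp.isClosed
  have hxC := hcl.frontier_subset hx
  have hd := (sphDiam_le_iff (by linarith) hD1.le hne).1 hdiam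
  have hcos : Real.cos D < 0 := Real.cos_neg_of_pi_div_two_lt_of_lt hD0 (by linarith)
  by_contra! hno
  obtain ⟨w₀, hw₀, hmin⟩ := hcomp.exists_isMinOn hne
    (f := fun w : Sph n => ⟪(x : Esp n), (w : Esp n)⟫) (by fun_prop)
  have hη : Real.cos D < ⟪(x : Esp n), (w₀ : Esp n)⟫ :=
    lt_of_le_of_ne (hd x hxC w₀ hw₀) (hno w₀ hw₀).symm
  set δ := min (1 / 2) (⟪(x : Esp n), (w₀ : Esp n)⟫ - Real.cos D) with hδ
  have hδ0 : 0 < δ := lt_min (by norm_num) (by linarith)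
  have hδ1 : δ ≤ 1 / 2 := min_le_left _ _
  have hδ2 : δ ≤ ⟪(x : Esp n), (w₀ : Esp n)⟫ - Real.cos D := min_le_right _ _
  have hBC : ∀ z ∈ Metric.closedBall x δ, ∀ w ∈ C,
      Real.cos D ≤ ⟪(z : Esp n), (w : Esp n)⟫ := by
    intro z hz w hw
    have h1 : ⟪(x : Esp n), (w₀ : Esp n)⟫ ≤ ⟪(x : Esp n), (w : Esp n)⟫ := hmin hw
    have h2 := abs_real_inner_le_norm ((z : Esp n) - x) (w : Esp n)
    rw [norm_sph, mul_one, ← dist_eq_norm, ← Subtype.dist_eq, inner_sub_left] at h2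
    have h3 := (abs_le.1 h2).1
    have h4 : dist z x ≤ δ := hz
    linarith
  have hBB : ∀ z ∈ Metric.closedBall x δ, ∀ w ∈ Metric.closedBall x δ,
      Real.cos D ≤ ⟪(z : Esp n), (w : Esp n)⟫ := by
    intro z hz w hw
    rw [inner_eq_dist]
    have h1 : dist z x ≤ δ := hz
    have h2 : dist w x ≤ δ := hw
    have h3 := dist_triangle_right z w x
    nlinarith [dist_nonneg (x := z) (y := w)]
  have hXd : sphDiam (C ∪ Metric.closedBall x δ) ≤ D := by
    refine (sphDiam_le_iff (by linarith) hD1.le ⟨x, Or.inl hxC⟩).2 ?_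
    rintro z (hz | hz) w (hw | hw)
    · exact hd z hz w hw
    · rw [real_inner_comm]; exact hBC w hw z hz
    · exact hBC z hz w hw
    · exact hBB z hz w hw
  have hle : sphVol n (C ∪ Metric.closedBall x δ) ≤ sphVol n C := by
    rw [hmax]
    exact le_sSup ⟨_, hcomp.union (isCompact_closedBall _ _), hXd, rfl⟩
  have hopen : IsOpen (Metric.ball x δ \ C) := Metric.isOpen_ball.sdiff hcl
  have hnonempty : (Metric.ball x δ \ C).Nonempty := by
    by_contra hemp
    rw [Set.not_nonempty_iff_eq_empty, Set.sdiff_eq_empty] at hemp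
    exact hx.2 (mem_interior_iff_mem_nhds.2 (mem_of_superset (Metric.ball_mem_nhds x hδ0) hemp))
  have hpos := sphVol_pos_of_isOpen hopen hnonempty
  have hlf := sphVol_locallyFinite n
  have hfin : sphVol n C ≠ ⊤ := hcomp.measure_lt_top.ne
  have hsum : sphVol n C + sphVol n (Metric.ball x δ \ C) ≤ sphVol n C := by
    rw [← measure_union Set.disjoint_sdiff_right hopen.measurableSet]
    refine le_trans (measure_mono ?_) hle
    exact Set.union_subset_union_right _ (Set.sdiff_subset.trans Metric.ball_subset_closedBall)
  exact absurd hsum (not_le.2 (ENNReal.lt_add_right hfin hpos.ne'))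

lemma frontier_nonempty_of_solid {n : ℕ} {C : Set (Sph n)} (hn : 2 ≤ n) (hC : Solid C) :
    (frontier C).Nonempty := by
  have : PreconnectedSpace (Sph n) := by
    refine Subtype.preconnectedSpace (isPreconnected_sphere ?_ _ _)
    rw [← Module.finrank_eq_rank, finrank_euclideanSpace, Fintype.card_fin]
    exact_mod_cast (by omega : 1 < n + 1)
  exact nonempty_frontier_iff.2 ⟨hC.1, hC.2.2.1⟩

/-- a solid `D`-maximal set (`π/2 < D < π`) admits a strongly regular
boundary point `x₀` such that arbitrarily close to `x₀` there are strongly regular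
boundary points outside any given 2-dimensional linear subspace through `x₀`. -/
theorem DMaximal_good_base_point (n : ℕ) (hn : 2 ≤ n) (D : ℝ)
    (hD0 : Real.pi / 2 < D) (hD1 : D < Real.pi) (C : Set (Sph n))
    (hC : DMaximal n D C) (hCsolid : Solid C) :
    ∃ x₀ : Sph n, StronglyRegular C x₀ ∧
      ∀ L : Submodule ℝ (Esp n), Module.finrank ℝ L = 2 → (x₀ : Esp n) ∈ L →
        ∀ ε : ℝ, 0 < ε → ε < Real.pi / 2 →
          ∃ y : Sph n, StronglyRegular C y ∧ gd y x₀ < ε ∧ (y : Esp n) ∉ L := by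
  have hcos : Real.cos D < 0 := Real.cos_neg_of_pi_div_two_lt_of_lt hD0 (by linarith)
  have hsin : 0 < Real.sin D := Real.sin_pos_of_pos_of_lt_pi (by linarith [Real.pi_pos]) hD1
  have hcl : IsClosed C := hC.1.isClosed
  have hS : C ⊆ closure (interior C) := hCsolid.2.2.2.le
  by_contra! hcon
  refine false_of_locally_flat hn (C := C) hcl hS (frontier_nonempty_of_solid hn hCsolid)
    (c := -Real.cos D) hsin (neg_pos.2 hcos) (by rw [neg_sq]; exact Real.cos_sq_add_sin_sq D) ?_ ?_
    ?_
  · rw [neg_neg]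
    exact (sphDiam_le_iff (by linarith [Real.pi_pos]) hD1.le hCsolid.1).1 hC.2.1
  · intro x hx
    rw [neg_neg]
    exact exists_inner_eq hD0 hD1 hC hCsolid.1 hx
  · intro x hx
    obtain ⟨L, hL, -, ε, hε, -, hy⟩ := hcon x hx
    have hLp : Lᗮ ≠ ⊥ := by
      intro hbot
      have h1 := Submodule.finrank_add_finrank_orthogonal L
      have h2 : Module.finrank ℝ (Esp n) = n + 1 := by simp
      rw [hbot, finrank_bot, hL, h2] at h1
      omega
    obtain ⟨u, hu, hu0⟩ := Submodule.exists_mem_ne_zero_of_ne_bot hLp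
    have hu1 : 0 < ‖u‖ := norm_pos_iff.2 hu0
    have hV : IsOpen {y : Sph n | gd y x < ε} :=
      isOpen_lt (Real.continuous_arccos.comp (by fun_prop)) continuous_const
    refine ⟨‖u‖⁻¹ • u, ?_, {y : Sph n | gd y x < ε}, hV.mem_nhds ?_, ?_⟩
    · rw [norm_smul, norm_inv, norm_norm, inv_mul_cancel₀ hu1.ne']
    · change Real.arccos _ < ε
      rwa [inner_self_sph, Real.arccos_one]
    · intro y hyF hyV
      rw [inner_smul_right]
      by_contra hne
      -- The inner product with `u` is nonzero near `y`, hence at some strongly regular point.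
      have hW : {z : Sph n | ⟪(z : Esp n), u⟫ ≠ 0} ∈ 𝓝 y :=
        IsOpen.mem_nhds (isOpen_ne_fun (by fun_prop) continuous_const) (right_ne_zero_of_mul hne)
      obtain ⟨z, ⟨hz1, hz2⟩, hz⟩ :=
        exists_stronglyRegular hcl hS hyF (inter_mem hW (hV.mem_nhds hyV))
      exact hz1 ((Submodule.mem_orthogonal L u).1 hu _ (hy z hz hz2))
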